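/- arXiv:2503.06817 — 7 statements merged into one kernel-verified Lean document; each statement's English description precedes it below -/
import Mathlib

section
/- Let q ≥ 1, let W ∈ ℝ^{q×q} be a diagonal matrix with strictly positive diagonal entries, and let J ∈ ℝ^{q×q} be such that JW is symmetric and negative semidefinite. Then there exist an invertible matrix P ∈ ℝ^{q×q} and nonnegative real numbers λ_1,…,λ_q such that PᵀP = W^{-1} (in particular PᵀP is diagonal with strictly positive diagonal entries) and P·J = −diag(λ_1,…,λ_q)·P; that is, the model satisfies a stability structure (P, a, λ) with a_k > 0 and λ_k ≥ 0. -/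
open Matrix

/-- If `W` is a diagonal matrix with strictly positive diagonal entries and `J·W` is
symmetric and negative semidefinite, then `J` satisfies a stability structure
`(P, a, λ)`: `P` invertible, `Pᵀ·P = W⁻¹` diagonal with strictly positive diagonal
entries, and `P·J = -diag(λ)·P` with `λ_k ≥ 0`. -/
theorem stmt_1 (q : ℕ) (hq : 1 ≤ q) (w : Fin q → ℝ) (hw : ∀ i, 0 < w i)
    (J : Matrix (Fin q) (Fin q) ℝ)
    (hsymm : (J * Matrix.diagonal w).IsSymm)
    (hnsd : ∀ x : Fin q → ℝ, x ⬝ᵥ (J * Matrix.diagonal w).mulVec x ≤ 0) :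
    ∃ (P : Matrix (Fin q) (Fin q) ℝ) (lam : Fin q → ℝ),
      IsUnit P.det ∧ (∀ k, 0 ≤ lam k) ∧
      Pᵀ * P = Matrix.diagonal (fun i => (w i)⁻¹) ∧
      (∀ i, 0 < (w i)⁻¹) ∧
      P * J = -(Matrix.diagonal lam * P) := by
  have hN : (-(J * Matrix.diagonal w)).PosSemidef := by
    refine Matrix.PosSemidef.of_dotProduct_mulVec_nonneg ?_ ?_
    · unfold Matrix.IsHermitian
      rw [Matrix.conjTranspose_eq_transpose_of_trivial, Matrix.transpose_neg, hsymm.eq]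
    · intro x
      have := hnsd x
      simp only [star_trivial, Matrix.neg_mulVec, dotProduct_neg]
      linarith
  have hs : ∀ i, 0 < Real.sqrt (w i) := fun i => Real.sqrt_pos.2 (hw i)
  set D : Matrix (Fin q) (Fin q) ℝ := Matrix.diagonal (fun i => (Real.sqrt (w i))⁻¹) with hD
  have hDT : Dᵀ = D := Matrix.diagonal_transpose _
  have hM := hN.conjTranspose_mul_mul_same D
  rw [Matrix.conjTranspose_eq_transpose_of_trivial, hDT] at hM
  have hDD : D * D = Matrix.diagonal (fun i => (w i)⁻¹) := by
    rw [hD, Matrix.diagonal_mul_diagonal]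
    congr 1
    funext i
    rw [← mul_inv, Real.mul_self_sqrt (hw i).le]
  have hWDD : Matrix.diagonal w * (D * D) = 1 := by
    rw [hDD, Matrix.diagonal_mul_diagonal, ← Matrix.diagonal_one]
    congr 1
    funext i
    exact mul_inv_cancel₀ (hw i).ne'
  set M := D * -(J * Matrix.diagonal w) * D with hMdef
  have hMD : D * J = -(M * D) := by
    have : M * D = -(D * J * (Matrix.diagonal w * (D * D))) := by
      rw [hMdef]; noncomm_ring
    rw [this, hWDD]; simp
  let U : Matrix (Fin q) (Fin q) ℝ := hM.1.eigenvectorUnitary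
  have hU1 : star U * U = 1 := Unitary.coe_star_mul_self hM.1.eigenvectorUnitary
  have hU2 : U * star U = 1 := Unitary.coe_mul_star_self hM.1.eigenvectorUnitary
  have hsp : M = U * Matrix.diagonal hM.1.eigenvalues * star U := by
    have := hM.1.spectral_theorem
    rw [Unitary.conjStarAlgAut_apply] at this
    exact this
  have hst : star U = Uᵀ := by
    rw [Matrix.star_eq_conjTranspose, Matrix.conjTranspose_eq_transpose_of_trivial]
  have hPP : (star U * D)ᵀ * (star U * D) = Matrix.diagonal (fun i => (w i)⁻¹) := by
    rw [Matrix.transpose_mul, hDT, hst, Matrix.transpose_transpose, ← hst, ← hDD]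
    calc D * U * (star U * D) = D * (U * star U) * D := by noncomm_ring
      _ = D * D := by rw [hU2, mul_one]
  refine ⟨star U * D, hM.1.eigenvalues, ?_, hM.eigenvalues_nonneg, hPP,
    fun i => inv_pos.2 (hw i), ?_⟩
  · have h := congrArg Matrix.det hPP
    rw [Matrix.det_mul, Matrix.det_diagonal] at h
    have hp : (∏ i, (w i)⁻¹) ≠ 0 := Finset.prod_ne_zero_iff.2 fun i _ => (inv_pos.2 (hw i)).ne'
    rw [← h] at hp
    exact (right_ne_zero_of_mul hp).isUnit
  · have h1 : star U * M = Matrix.diagonal hM.1.eigenvalues * star U := by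
      calc star U * M = star U * (U * Matrix.diagonal hM.1.eigenvalues * star U) :=
            congrArg _ hsp
        _ = (star U * U) * Matrix.diagonal hM.1.eigenvalues * star U := by
            simp only [mul_assoc]
        _ = _ := by rw [hU1, one_mul]
    rw [mul_assoc, hMD, mul_neg, ← mul_assoc, h1, mul_assoc]
end

section
/- Let q ≥ 1, let M ∈ ℝ^{q×q} be invertible with first row equal to the all-ones vector 𝟙ᵀ, let S = diag(s_1,…,s_q), let Λ = M^{-1}·S·M, let ω ∈ ℝ^q satisfy Σ_{k=1}^q ω_k = 1, let E = ω𝟙ᵀ (so E_{kj} = ω_k), let c ∈ ℝ, and set J = Λ(E − I) + cE. Then for every k ∈ {2,…,q}, the vector v_k = M^{-1}e_k satisfies J·v_k = −s_k·v_k (i.e., v_k is an eigenvector of J with eigenvalue −s_k), and the all-ones vector is a left eigenvector of J with eigenvalue c, i.e., 𝟙ᵀ·J = c·𝟙ᵀ. -/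
open Matrix

/-- For the MRT collision Jacobian `J = Λ(E-I) + cE` with `Λ = M⁻¹·S·M`,
each column `v_k = M⁻¹·e_k` (for `k ≠ 0`, the non-conserved moments) is an
eigenvector of `J` with eigenvalue `-s_k`, and the all-ones vector is a left
eigenvector of `J` with eigenvalue `c`. -/
theorem stmt_4 (q : ℕ) (hq : 1 ≤ q) (M : Matrix (Fin q) (Fin q) ℝ) (hM : IsUnit M.det)
    (hrow : ∀ j, M ⟨0, hq⟩ j = 1) (s : Fin q → ℝ) (ω : Fin q → ℝ) (hω : ∑ k, ω k = 1)
    (c : ℝ) :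
    let E := Matrix.vecMulVec ω (fun _ => (1 : ℝ))
    let Λ := M⁻¹ * Matrix.diagonal s * M
    let J := Λ * (E - 1) + c • E
    (∀ k : Fin q, k ≠ ⟨0, hq⟩ →
      J.mulVec (M⁻¹.mulVec (Pi.single k 1)) = (-(s k)) • M⁻¹.mulVec (Pi.single k 1)) ∧
    Matrix.vecMul (fun _ => (1 : ℝ)) J = c • (fun _ => (1 : ℝ)) := by
  intro E Λ J
  have h1 : (fun _ => (1 : ℝ)) = Matrix.vecMul (Pi.single ⟨0, hq⟩ 1) M := by
    funext j
    simp [hrow]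
  have hMM : M * M⁻¹ = 1 := Matrix.mul_nonsing_inv M hM
  constructor
  · intro k hk
    have hdot : (fun _ => (1 : ℝ)) ⬝ᵥ (M⁻¹.mulVec (Pi.single k 1)) = 0 := by
      rw [h1, Matrix.dotProduct_mulVec, Matrix.vecMul_vecMul, hMM, Matrix.vecMul_one]
      simp [Pi.single_apply, hk.symm, hk]
    have hE : E.mulVec (M⁻¹.mulVec (Pi.single k 1)) = 0 := by
      simp only [E]
      rw [Matrix.vecMulVec_mulVec, hdot]
      simp
    have hΛ : Λ.mulVec (M⁻¹.mulVec (Pi.single k 1)) = s k • M⁻¹.mulVec (Pi.single k 1) := by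
      have h2 : (Matrix.diagonal s).mulVec (Pi.single k 1) = s k • (Pi.single k (1 : ℝ)) := by
        funext i
        rw [Matrix.mulVec_diagonal]
        by_cases h : i = k
        · subst h
          simp
        · simp [h]
      simp only [Λ]
      rw [Matrix.mulVec_mulVec, Matrix.mul_assoc, hMM, Matrix.mul_one,
        ← Matrix.mulVec_mulVec, h2, Matrix.mulVec_smul]
    simp only [J]
    rw [Matrix.add_mulVec, Matrix.smul_mulVec, hE, ← Matrix.mulVec_mulVec, Matrix.sub_mulVec,
      hE, Matrix.one_mulVec, zero_sub, Matrix.mulVec_neg, hΛ, smul_zero, add_zero, neg_smul]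
  · have hE : Matrix.vecMul (fun _ => (1 : ℝ)) E = (fun _ => (1 : ℝ)) := by
      funext j
      simp [E, Matrix.vecMul, dotProduct, Matrix.vecMulVec_apply, hω]
    have hΛ : Matrix.vecMul (fun _ => (1 : ℝ)) Λ = s ⟨0, hq⟩ • (fun _ => (1 : ℝ)) := by
      have h2 : Matrix.vecMul (Pi.single ⟨0, hq⟩ 1) (Matrix.diagonal s)
          = s ⟨0, hq⟩ • (Pi.single ⟨0, hq⟩ (1 : ℝ)) := by
        funext i
        rw [Matrix.vecMul_diagonal]
        by_cases h : i = ⟨0, hq⟩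
        · subst h
          simp
        · simp [h]
      simp only [Λ]
      rw [h1, Matrix.vecMul_vecMul, Matrix.mul_assoc, ← Matrix.mul_assoc M, hMM, Matrix.one_mul,
        ← Matrix.vecMul_vecMul, h2, Matrix.smul_vecMul]
    simp only [J]
    rw [Matrix.vecMul_add, Matrix.vecMul_smul, hE, ← Matrix.vecMul_vecMul, hΛ,
      Matrix.smul_vecMul, Matrix.vecMul_sub, hE, Matrix.vecMul_one, sub_self, smul_zero, zero_add]
end

section
/- Let q ≥ 1, let M ∈ ℝ^{q×q} be invertible with first row equal to the all-ones vector 𝟙ᵀ, let S = diag(s_1,…,s_q), let Λ = M^{-1}·S·M, let ω ∈ ℝ^q satisfy Σ_{k=1}^q ω_k = 1, let E = ω𝟙ᵀ (so E_{kj} = ω_k), let c ∈ ℝ, and set J = Λ(E − I) + cE. Then the characteristic polynomial of J equals (X − c)·∏_{k=2}^q (X + s_k); in particular the multiset of eigenvalues of J (with multiplicity) is {c, −s_2, …, −s_q}. -/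
open Matrix Polynomial

/-- The characteristic polynomial of the MRT collision Jacobian
`J = Λ(E-I) + cE` (with `Λ = M⁻¹·S·M`, `M` invertible with all-ones first row,
and `∑ ω = 1`) equals `(X - c)·∏_{k ≠ 0} (X + s_k)`; in particular the multiset
of eigenvalues of `J` with multiplicity is `{c, -s_2, …, -s_q}`. -/
theorem stmt_5 (q : ℕ) (hq : 1 ≤ q) (M : Matrix (Fin q) (Fin q) ℝ) (hM : IsUnit M.det)
    (hrow : ∀ j, M ⟨0, hq⟩ j = 1) (s : Fin q → ℝ) (ω : Fin q → ℝ) (hω : ∑ k, ω k = 1)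
    (c : ℝ) :
    let E := Matrix.vecMulVec ω (fun _ => (1 : ℝ))
    let J := M⁻¹ * Matrix.diagonal s * M * (E - 1) + c • E
    J.charpoly = (Polynomial.X - Polynomial.C c) *
        ∏ k ∈ Finset.univ.erase (⟨0, hq⟩ : Fin q), (Polynomial.X + Polynomial.C (s k)) ∧
    J.charpoly.roots =
      c ::ₘ (Finset.univ.erase (⟨0, hq⟩ : Fin q)).val.map (fun k => -s k) := by
  intro E J
  set z : Fin q := ⟨0, hq⟩ with hz
  have hzi : ∀ i : Fin q, z ≤ i := fun i => Fin.mk_le_of_le_val (Nat.zero_le _)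
  let u : Fin q → ℝ := M *ᵥ ω
  have hu : u z = 1 := by
    simp only [u, Matrix.mulVec, dotProduct, hrow, one_mul, hω]
  let N : Matrix (Fin q) (Fin q) ℝ := Matrix.vecMulVec u (Pi.single z 1)
  let K : Matrix (Fin q) (Fin q) ℝ := Matrix.diagonal s * (N - 1) + c • N
  have hEN : M * E = N * M := by
    simp only [E, N, u, Matrix.mul_vecMulVec, Matrix.vecMulVec_mul]
    congr 1
    ext j
    simp [hrow]
  have hJ : J = M⁻¹ * K * M := by
    have h1 : M⁻¹ * M = 1 := Matrix.nonsing_inv_mul M hM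
    have h2 : E = M⁻¹ * (N * M) := by
      rw [← hEN, ← Matrix.mul_assoc, h1, Matrix.one_mul]
    have h3 : M * (E - 1) = (N - 1) * M := by
      rw [Matrix.mul_sub, Matrix.sub_mul, hEN, Matrix.mul_one, Matrix.one_mul]
    have h4 : J = M⁻¹ * Matrix.diagonal s * (M * (E - 1)) + c • E := by
      simp only [J, Matrix.mul_assoc]
    rw [h4, h3]
    nth_rewrite 1 [h2]
    simp only [K, Matrix.mul_add, Matrix.add_mul, Matrix.mul_assoc, Matrix.mul_smul,
      Matrix.smul_mul]
  have hK : ∀ i j, K i j = s i * (u i * (if j = z then 1 else 0) - if i = j then 1 else 0)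
      + c * (u i * (if j = z then 1 else 0)) := by
    intro i j
    simp only [K, N, Matrix.add_apply, Matrix.diagonal_mul, Matrix.sub_apply, Matrix.smul_apply,
      Matrix.vecMulVec_apply, Pi.single_apply, Matrix.one_apply, smul_eq_mul]
  have hchar : J.charpoly = (Polynomial.X - Polynomial.C c) *
        ∏ k ∈ Finset.univ.erase z, (Polynomial.X + Polynomial.C (s k)) := by
    have h5 : J.charpoly = K.charpoly := by
      rw [hJ, Matrix.mul_assoc, Matrix.charpoly_mul_comm, Matrix.mul_assoc,
        Matrix.mul_nonsing_inv M hM, Matrix.mul_one]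
    have htri : Kᵀ.BlockTriangular id := by
      intro i j hij
      have hij' : j < i := hij
      have hiz : i ≠ z := fun h => absurd (hzi j) (not_le.mpr (h ▸ hij'))
      rw [Matrix.transpose_apply, hK]
      simp [hiz, hij'.ne]
    rw [h5, ← Matrix.charpoly_transpose, Matrix.charpoly_of_upperTriangular _ htri,
      ← Finset.mul_prod_erase _ _ (Finset.mem_univ z)]
    congr 1
    · rw [Matrix.transpose_apply, hK]
      simp [hu]
    · refine Finset.prod_congr rfl fun k hk => ?_
      have hkz : k ≠ z := Finset.ne_of_mem_erase hk
      rw [Matrix.transpose_apply, hK]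
      simp [hkz]
  refine ⟨hchar, ?_⟩
  have h6 : J.charpoly =
      ((c ::ₘ (Finset.univ.erase z).val.map (fun k => -s k)).map
        (fun a => Polynomial.X - Polynomial.C a)).prod := by
    rw [hchar, Multiset.map_cons, Multiset.prod_cons, Multiset.map_map]
    simp [Finset.prod]
  rw [h6, Polynomial.roots_multiset_prod_X_sub_C]
end

section
/- Let s_0, s_1, s_2 ∈ ℝ and ω_0, ω_1 ∈ ℝ with ω_0 + 2ω_1 = 1. Let M be the 3×3 matrix with rows (1,1,1), (0,1,−1), (0,1,1), let S = diag(s_0, s_1, s_2), let Λ = M^{-1}·S·M, let ω = (ω_0, ω_1, ω_1), let E = ω𝟙ᵀ (the 3×3 matrix with entries E_{kj} = ω_{k}), and let W = diag(ω_0, ω_1, ω_1). Then the matrix Λ·(E − I)·W is symmetric. -/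
open Matrix

/-- For the D1Q3 MRT lattice Boltzmann model with velocities `(0, 1, -1)`, natural
transformation matrix `M`, relaxation matrix `S = diag(s₀,s₁,s₂)`, weights
`ω = (ω₀, ω₁, ω₁)` with `ω₀ + 2ω₁ = 1`, equilibrium matrix `E = ω·𝟙ᵀ` and
`W = diag(ω)`, the matrix `Λ·(E - I)·W` with `Λ = M⁻¹·S·M` is symmetric. -/
theorem stmt_8 (s0 s1 s2 ω0 ω1 : ℝ) (hsum : ω0 + 2 * ω1 = 1) :
    let M : Matrix (Fin 3) (Fin 3) ℝ := !![1, 1, 1; 0, 1, -1; 0, 1, 1]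
    let S := Matrix.diagonal ![s0, s1, s2]
    let Λ := M⁻¹ * S * M
    let ω : Fin 3 → ℝ := ![ω0, ω1, ω1]
    let E := Matrix.vecMulVec ω (fun _ => (1 : ℝ))
    let W := Matrix.diagonal ω
    (Λ * (E - 1) * W).IsSymm := by
  intro M S Λ ω E W
  have hM : M⁻¹ = !![1, 0, -1; 0, 1/2, 1/2; 0, -1/2, 1/2] := by
    apply Matrix.inv_eq_right_inv
    ext i j
    fin_cases i <;> fin_cases j <;>
      simp [M, Matrix.mul_apply, Fin.sum_univ_three] <;> norm_num
  have h0 : ω0 = 1 - 2 * ω1 := by linarith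
  simp only [Λ, hM]
  apply Matrix.IsSymm.ext
  intro i j
  simp only [S, E, W, Matrix.mul_apply, Fin.sum_univ_three, Matrix.vecMulVec_apply,
      Matrix.diagonal_apply, Matrix.one_apply, Matrix.sub_apply]
  fin_cases i <;> fin_cases j <;> simp [M, ω] <;>
    first
    | (rw [h0]; ring)
    | (left; ring)
end

section
/- Consider the nine D2Q9 velocities c_1,…,c_9 = (0,0), (1,0), (0,1), (−1,0), (0,−1), (1,1), (−1,1), (−1,−1), (1,−1). Let M ∈ ℝ^{9×9} be the matrix whose (i,j) entry is p_i(c_j), where (p_1,…,p_9) = (1, X, Y, X², Y², XY, X²Y, XY², X²Y²). Let ω = (ω_0, ω_1, ω_2, ω_1, ω_2, ω̃, ω̃, ω̃, ω̃) with ω_0 + 2ω_1 + 2ω_2 + 4ω̃ = 1, let W = diag(ω), let E = ω𝟙ᵀ (so E_{kj} = ω_{k}), and let S = diag(s_0, s_x, s_y, s_{2|x²}, s_{2|y²}, s_{2|xy}, s_{3|x²y}, s_{3|xy²}, s_{4|x²y²}). Then M is invertible, and if s_{3|x²y} = s_y, s_{3|xy²} = s_x, and s_{4|x²y²} = s_{2|x²}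 = s_{2|y²}, then the matrix Λ·(E − I)·W with Λ = M^{-1}·S·M is symmetric. -/
open Matrix

/-- The nine D2Q9 discrete velocities. -/
noncomputable def c9 : Fin 9 → ℝ × ℝ :=
  ![(0, 0), (1, 0), (0, 1), (-1, 0), (0, -1), (1, 1), (-1, 1), (-1, -1), (1, -1)]

/-- The nine monomials `1, X, Y, X², Y², XY, X²Y, XY², X²Y²`. -/
noncomputable def p9 : Fin 9 → ℝ → ℝ → ℝ :=
  ![fun _ _ => 1, fun x _ => x, fun _ y => y, fun x _ => x ^ 2, fun _ y => y ^ 2,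
    fun x y => x * y, fun x y => x ^ 2 * y, fun x y => x * y ^ 2, fun x y => x ^ 2 * y ^ 2]

/-- The natural D2Q9 transformation matrix `M_{ij} = p_i(c_j)`. -/
noncomputable def M9 : Matrix (Fin 9) (Fin 9) ℝ :=
  Matrix.of fun i j => p9 i (c9 j).1 (c9 j).2

/-- The explicit inverse of `M9`: rows are the coefficients of the Lagrange
indicator polynomials of the nine velocities. -/
noncomputable def N9 : Matrix (Fin 9) (Fin 9) ℝ :=
  !![1, 0, 0, -1, -1, 0, 0, 0, 1;
     0, 1/2, 0, 1/2, 0, 0, 0, -1/2, -1/2;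
     0, 0, 1/2, 0, 1/2, 0, -1/2, 0, -1/2;
     0, -1/2, 0, 1/2, 0, 0, 0, 1/2, -1/2;
     0, 0, -1/2, 0, 1/2, 0, 1/2, 0, -1/2;
     0, 0, 0, 0, 0, 1/4, 1/4, 1/4, 1/4;
     0, 0, 0, 0, 0, -1/4, 1/4, -1/4, 1/4;
     0, 0, 0, 0, 0, 1/4, -1/4, -1/4, 1/4;
     0, 0, 0, 0, 0, -1/4, -1/4, 1/4, 1/4]

/-- Explicit entries of `M9`. -/
theorem M9_eq : M9 =
  !![1, 1, 1, 1, 1, 1, 1, 1, 1;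
     0, 1, 0, -1, 0, 1, -1, -1, 1;
     0, 0, 1, 0, -1, 1, 1, -1, -1;
     0, 1, 0, 1, 0, 1, 1, 1, 1;
     0, 0, 1, 0, 1, 1, 1, 1, 1;
     0, 0, 0, 0, 0, 1, -1, 1, -1;
     0, 0, 0, 0, 0, 1, 1, -1, -1;
     0, 0, 0, 0, 0, 1, -1, -1, 1;
     0, 0, 0, 0, 0, 1, 1, 1, 1] := by
  ext i j
  fin_cases i <;> fin_cases j <;> simp [M9, p9, c9]

set_option maxHeartbeats 4000000 in
theorem N9_mul : N9 * M9 = 1 := by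
  rw [M9_eq]
  ext i j
  fin_cases i <;> fin_cases j <;>
    simp [N9, Matrix.mul_apply, Fin.sum_univ_succ] <;> norm_num

theorem gram_apply (ω : Fin 9 → ℝ) (i j : Fin 9) :
    (M9 * ((Matrix.vecMulVec ω (fun _ => (1 : ℝ)) - 1) * Matrix.diagonal ω) * M9ᵀ : Matrix (Fin 9) (Fin 9) ℝ) i j =
      (∑ k, M9 i k * ω k) * (∑ k, M9 j k * ω k) - ∑ k, M9 i k * M9 j k * ω k := by
  have h : (Matrix.vecMulVec ω (fun _ => (1 : ℝ)) - 1) * Matrix.diagonal ω =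
      Matrix.vecMulVec ω ω - Matrix.diagonal ω := by
    rw [sub_mul, one_mul]
    congr 1
    ext a b
    simp [Matrix.mul_diagonal, Matrix.vecMulVec_apply]
  rw [h, mul_sub, sub_mul, Matrix.sub_apply, Matrix.mul_vecMulVec, Matrix.vecMulVec_mul,
    Matrix.vecMulVec_apply, Matrix.vecMul_transpose]
  congr 1
  rw [Matrix.mul_apply]
  refine Finset.sum_congr rfl fun k _ => ?_
  rw [Matrix.mul_diagonal, Matrix.transpose_apply]
  ring

set_option maxHeartbeats 4000000 in
/-- The D2Q9 natural transformation matrix `M9` is invertible, and under the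
symmetry conditions `s_{3|x²y} = s_y`, `s_{3|xy²} = s_x`,
`s_{4|x²y²} = s_{2|x²} = s_{2|y²}` the matrix `Λ·(E - I)·W` with `Λ = M⁻¹·S·M`
is symmetric. -/
theorem stmt_9 (ω0 ω1 ω2 ωt s0 sx sy s2x2 s2y2 s2xy s3x2y s3xy2 s4x2y2 : ℝ)
    (hsum : ω0 + 2 * ω1 + 2 * ω2 + 4 * ωt = 1) :
    IsUnit M9.det ∧
    (s3x2y = sy → s3xy2 = sx → s4x2y2 = s2x2 → s2x2 = s2y2 →
      let ω : Fin 9 → ℝ := ![ω0, ω1, ω2, ω1, ω2, ωt, ωt, ωt, ωt]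
      let W := Matrix.diagonal ω
      let E := Matrix.vecMulVec ω (fun _ => (1 : ℝ))
      let S := Matrix.diagonal ![s0, sx, sy, s2x2, s2y2, s2xy, s3x2y, s3xy2, s4x2y2]
      ((M9⁻¹ * S * M9) * (E - 1) * W).IsSymm) := by
  have hN := N9_mul
  refine ⟨Matrix.isUnit_det_of_left_inverse hN, ?_⟩
  rintro rfl rfl rfl rfl
  intro ω W E S
  rw [Matrix.inv_eq_left_inv hN]
  have hT : M9ᵀ * N9ᵀ = 1 := by rw [← Matrix.transpose_mul, hN, Matrix.transpose_one]
  set H := M9 * ((E - 1) * W) * M9ᵀ with hH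
  have hHij : ∀ i j, H i j =
      (∑ k, M9 i k * ω k) * (∑ k, M9 j k * ω k) - ∑ k, M9 i k * M9 j k * ω k :=
    gram_apply ω
  have hsymm : Hᵀ = H := by
    ext i j
    rw [Matrix.transpose_apply, hHij, hHij, mul_comm]
    congr 1
    exact Finset.sum_congr rfl fun k _ => by ring
  have hcomm : S * H = H * S := by
    obtain rfl : ω0 = 1 - 2 * ω1 - 2 * ω2 - 4 * ωt := by linarith
    ext i j
    rw [Matrix.diagonal_mul, Matrix.mul_diagonal, hHij, M9_eq]
    fin_cases i <;> fin_cases j <;>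
      simp [ω, Fin.sum_univ_succ] <;> ring_nf
  have key : N9 * S * M9 * (E - 1) * W = N9 * (S * H) * N9ᵀ := by
    calc N9 * S * M9 * (E - 1) * W = N9 * S * M9 * ((E - 1) * W) * (M9ᵀ * N9ᵀ) := by
          rw [hT, mul_one, mul_assoc _ (E - 1) W]
      _ = _ := by simp only [hH, mul_assoc]
  rw [key, Matrix.IsSymm, Matrix.transpose_mul, Matrix.transpose_mul, Matrix.transpose_mul,
    Matrix.transpose_transpose, hsymm, Matrix.diagonal_transpose, ← hcomm]
  simp only [mul_assoc]
end

section
/- Let d ≥ 2, let ω̃ ≠ 0, and let ε ∈ ℝ with ε ≠ 1/2 and ε ≠ 5/6. Then: (i) there exists a unique nonzero real s (namely s = 6(2ε−1)/(6ε−5)) satisfying ε/4 = 1/24 − (1/4)(1 − 1/s) + (1/2 − 1/(2s))·ε; and (ii) if moreover (1/2 + 1/(2s))·ε² + 5ω̃ − 2ω̃/s ≠ 0, then there exists a unique nonzero real s' satisfying (1/2 + 1/(2s))·ε² = (2/s + 4/s' − 5)·ω̃. In other words, the fourth-order consistency system for the isotropic diffusion equation with s_{x_i} = 1 is uniquely solvable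 for the relaxation parameters s_{2|x_i²} = s and s_{2|x_ix_j} = s'. -/
/-- Unique solvability of the fourth-order consistency system for the isotropic
diffusion equation with `s_{x_i} = 1`: (i) there is a unique nonzero real `s`
(namely `s = 6(2ε-1)/(6ε-5)`) with `ε/4 = 1/24 - (1/4)(1 - 1/s) + (1/2 - 1/(2s))·ε`;
(ii) for that `s`, if `(1/2 + 1/(2s))ε² + 5ω̃ - 2ω̃/s ≠ 0`, there is a unique nonzero
real `s'` with `(1/2 + 1/(2s))ε² = (2/s + 4/s' - 5)·ω̃`. -/
theorem stmt_13 (d : ℕ) (hd : 2 ≤ d) (ωt ε : ℝ) (hωt : ωt ≠ 0)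
    (hε1 : ε ≠ 1 / 2) (hε2 : ε ≠ 5 / 6) :
    (∃! s : ℝ, s ≠ 0 ∧
      ε / 4 = 1 / 24 - (1 / 4) * (1 - 1 / s) + (1 / 2 - 1 / (2 * s)) * ε) ∧
    (6 * (2 * ε - 1) / (6 * ε - 5) ≠ 0 ∧
      ε / 4 = 1 / 24 - (1 / 4) * (1 - 1 / (6 * (2 * ε - 1) / (6 * ε - 5))) +
        (1 / 2 - 1 / (2 * (6 * (2 * ε - 1) / (6 * ε - 5)))) * ε) ∧
    (∀ s : ℝ, s ≠ 0 →
      ε / 4 = 1 / 24 - (1 / 4) * (1 - 1 / s) + (1 / 2 - 1 / (2 * s)) * ε →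
      (1 / 2 + 1 / (2 * s)) * ε ^ 2 + 5 * ωt - 2 * ωt / s ≠ 0 →
      ∃! s' : ℝ, s' ≠ 0 ∧
        (1 / 2 + 1 / (2 * s)) * ε ^ 2 = (2 / s + 4 / s' - 5) * ωt) := by
  have h1 : 2 * ε - 1 ≠ 0 := fun h => hε1 (by linarith)
  have h2 : 6 * ε - 5 ≠ 0 := fun h => hε2 (by linarith)
  have h0 : 6 * (2 * ε - 1) / (6 * ε - 5) ≠ 0 :=
    div_ne_zero (mul_ne_zero (by norm_num) h1) h2
  have key : ∀ s : ℝ, s ≠ 0 →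
      (ε / 4 = 1 / 24 - (1 / 4) * (1 - 1 / s) + (1 / 2 - 1 / (2 * s)) * ε ↔
        s = 6 * (2 * ε - 1) / (6 * ε - 5)) := by
    intro s hs
    have e : 1 / 24 - (1 / 4) * (1 - 1 / s) + (1 / 2 - 1 / (2 * s)) * ε - ε / 4
        = (s * (6 * ε - 5) - 6 * (2 * ε - 1)) / (24 * s) := by
      field_simp
      ring
    rw [eq_div_iff h2]
    constructor
    · intro h
      have h3 : (s * (6 * ε - 5) - 6 * (2 * ε - 1)) / (24 * s) = 0 := by
        rw [← e]; linarith
      rcases div_eq_zero_iff.mp h3 with h4 | h4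
      · linarith
      · exact absurd h4 (mul_ne_zero (by norm_num) hs)
    · intro h
      rw [h, sub_self, zero_div] at e
      linarith
  refine ⟨⟨_, ⟨h0, (key _ h0).2 rfl⟩, fun y hy => (key y hy.1).1 hy.2⟩,
    ⟨h0, (key _ h0).2 rfl⟩, ?_⟩
  intro s hs _ hK
  have e : ∀ x : ℝ, ((1 / 2 + 1 / (2 * s)) * ε ^ 2 = (2 / s + 4 / x - 5) * ωt ↔
      (1 / 2 + 1 / (2 * s)) * ε ^ 2 + 5 * ωt - 2 * ωt / s = 4 * ωt / x) := by
    intro x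
    have e1 : (2 / s + 4 / x - 5) * ωt = 2 * ωt / s + 4 * ωt / x - 5 * ωt := by ring
    rw [e1]
    constructor <;> intro h <;> linarith
  simp only [e]
  generalize (1 / 2 + 1 / (2 * s)) * ε ^ 2 + 5 * ωt - 2 * ωt / s = K at hK
  have h4 : 4 * ωt ≠ 0 := mul_ne_zero (by norm_num) hωt
  refine ⟨4 * ωt / K, ⟨div_ne_zero h4 hK, (div_div_cancel₀ h4).symm⟩, ?_⟩
  rintro y ⟨hy, h⟩
  rw [eq_div_iff hy] at h
  rw [eq_div_iff hK]
  linarith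
end

section
/- Let η ≠ 0, Δt > 0 and s̃ ≠ 0 be real numbers such that D := (s̃ − 4Δtη + Δt²s̃η² + 2Δts̃η)/s̃ ≥ 0 and Δtη + 1 − √D ≠ 0, and define s := 2ηΔt/(Δtη − √D + 1). Then s ≠ 0 and the identity 1/s̃ − 1/2 = (1/s − 1/2) + Δtη·(1/s)·(1 − 1/s) holds; equivalently, writing ε̃ = (1/s̃ − 1/2)·C and ε = (1/s − 1/2)·C for any constant C, one has ε̃ = ε + (Δt/s)·(1 − 1/s)·η·C. -/
/-- Closed-form solution for the first-order relaxation parameter with a linear source: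
if `D = (s̃ - 4Δtη + Δt²s̃η² + 2Δts̃η)/s̃ ≥ 0`, `Δtη + 1 - √D ≠ 0` and
`s = 2ηΔt/(Δtη - √D + 1)`, then `s ≠ 0` and
`1/s̃ - 1/2 = (1/s - 1/2) + Δtη·(1/s)·(1 - 1/s)`; equivalently, for any constant `C`,
`(1/s̃ - 1/2)·C = (1/s - 1/2)·C + (Δt/s)·(1 - 1/s)·η·C`. -/
theorem stmt_14 (η Δt st : ℝ) (hη : η ≠ 0) (hΔt : 0 < Δt) (hst : st ≠ 0)
    (D : ℝ) (hD : D = (st - 4 * Δt * η + Δt ^ 2 * st * η ^ 2 + 2 * Δt * st * η) / st)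
    (hD0 : 0 ≤ D) (hden : Δt * η + 1 - Real.sqrt D ≠ 0)
    (s : ℝ) (hs : s = 2 * η * Δt / (Δt * η - Real.sqrt D + 1)) :
    s ≠ 0 ∧
    1 / st - 1 / 2 = (1 / s - 1 / 2) + Δt * η * (1 / s) * (1 - 1 / s) ∧
    ∀ C : ℝ, (1 / st - 1 / 2) * C = (1 / s - 1 / 2) * C + (Δt / s) * (1 - 1 / s) * η * C := by
  have hr : Real.sqrt D ^ 2 = D := Real.sq_sqrt hD0
  generalize Real.sqrt D = r at hr hden hs
  have hΔ : Δt ≠ 0 := hΔt.ne'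
  have hden' : Δt * η - r + 1 ≠ 0 := by
    intro h
    apply hden
    linarith
  have hs0 : s ≠ 0 := by
    rw [hs]
    exact div_ne_zero (mul_ne_zero (mul_ne_zero two_ne_zero hη) hΔ) hden'
  have hu : 1 / s = (Δt * η - r + 1) / (2 * η * Δt) := by
    rw [hs, one_div_div]
  have hD2 : r ^ 2 = (Δt * η + 1) ^ 2 - 4 * (Δt * η) * (1 / st) := by
    rw [hr, hD]
    field_simp
    ring
  have key : 1 / st - 1 / 2 = (1 / s - 1 / 2) + Δt * η * (1 / s) * (1 - 1 / s) := by
    have h1 : 1 / st = ((Δt * η + 1) ^ 2 - r ^ 2) / (4 * (Δt * η)) := by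
      rw [hD2]
      field_simp
      ring
    rw [hu, h1]
    field_simp
    ring
  refine ⟨hs0, key, fun C => ?_⟩
  rw [key]
  ring
end
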